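/- For every number of machines m ≥ 2 and every prediction error level α ≥ 1, every non-clairvoyant algorithm for preemptive scheduling with prediction on m identical machines has competitive ratio at least (⌈(m−1)α²⌉ + mα² − m + 1)/(α² + ⌈(m−1)α²⌉). -/

import Mathlib

/-!
All jobs get the prediction `α`, so every actual time in `[1, α²]` is allowed. Let
`K = ⌈(m-1)α²⌉` and consider `K + 1` jobs. Run the algorithm with all actual times equal to `1`,
and let `j` be a job that finishes last, at time `T`. The total work `K + 1` is done by time `T`,
so `K + 1 ≤ m T`. Now enlarge the actual time of `j` to `α²`: before `T` the algorithm cannot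
notice the change, so `j` has received exactly one unit by time `T` and still needs `α² - 1`
more. The makespan is therefore at least `(K + 1)/m + α² - 1`. As `K ≥ (m-1)α²`, no job exceeds
the average load, and `OPT = (K + α²)/m`; the quotient of the two is the claimed ratio.
-/

/-!
Model for non-clairvoyant preemptive scheduling with prediction on `m` identical
machines.  A (deterministic) non-clairvoyant preemptive algorithm is described by the
amounts `w n q p j t` of each job `j` it has processed by time `t` when run on the
instance with predictions `q` and actual processing requirements `p`.  The amounts are
nondecreasing, start at `0`, each job is processed at speed at most `1` (it cannot run
on two machines simultaneously), the total processing speed is at most `m`, a job is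
never processed beyond its requirement, and every job eventually completes.
Non-clairvoyance: the run can depend on the actual processing times only through the
completions observed so far: if each job either has the same actual time in `p` and
`p'`, or is never completed before time `T` (its processed amount staying strictly below
both `p j` and `p' j`), then the runs on `(q, p)` and `(q, p')` coincide up to time `T`.
All requirements are imposed on valid instances, i.e. those with positive `p` and `q`. -/
structure PreAlg (m : ℕ) where
  w : (n : ℕ) → (Fin n → ℝ) → (Fin n → ℝ) → Fin n → ℝ → ℝ
  w_zero : ∀ (n : ℕ) (q p : Fin n → ℝ), (∀ j, 0 < q j) → (∀ j, 0 < p j) →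
    ∀ j, w n q p j 0 = 0
  w_mono : ∀ (n : ℕ) (q p : Fin n → ℝ), (∀ j, 0 < q j) → (∀ j, 0 < p j) →
    ∀ j, Monotone (w n q p j)
  w_speed_le_one : ∀ (n : ℕ) (q p : Fin n → ℝ), (∀ j, 0 < q j) → (∀ j, 0 < p j) →
    ∀ j s t, s ≤ t → w n q p j t - w n q p j s ≤ t - s
  w_total_speed : ∀ (n : ℕ) (q p : Fin n → ℝ), (∀ j, 0 < q j) → (∀ j, 0 < p j) →
    ∀ s t, s ≤ t → ∑ j, (w n q p j t - w n q p j s) ≤ (m : ℝ) * (t - s)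
  w_le : ∀ (n : ℕ) (q p : Fin n → ℝ), (∀ j, 0 < q j) → (∀ j, 0 < p j) →
    ∀ j t, w n q p j t ≤ p j
  completes : ∀ (n : ℕ) (q p : Fin n → ℝ), (∀ j, 0 < q j) → (∀ j, 0 < p j) →
    ∀ j, ∃ t, w n q p j t = p j
  nonclairvoyant : ∀ (n : ℕ) (q p p' : Fin n → ℝ), (∀ j, 0 < q j) → (∀ j, 0 < p j) →
    (∀ j, 0 < p' j) → ∀ T : ℝ,
    (∀ j, p j = p' j ∨ ∀ s, s < T → w n q p j s < p j ∧ w n q p j s < p' j) →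
    ∀ j t, t ≤ T → w n q p j t = w n q p' j t

/-- Completion time of job `j` in the run of the non-clairvoyant preemptive algorithm
`A` on the instance `(q, p)`. -/
noncomputable def preCompletion {m : ℕ} (A : PreAlg m) (n : ℕ) (q p : Fin n → ℝ)
    (j : Fin n) : ℝ :=
  sInf {t : ℝ | A.w n q p j t = p j}

/-- Makespan of the schedule produced by the non-clairvoyant preemptive algorithm `A`
on the instance `(q, p)`. -/
noncomputable def preMakespan {m : ℕ} (A : PreAlg m) (n : ℕ) (q p : Fin n → ℝ) : ℝ :=
  sSup (Set.range (preCompletion A n q p))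

/-- Optimal preemptive makespan on `m` identical machines:
`max (max_j p j) ((∑ j, p j) / m)`. -/
noncomputable def OPTpre (m n : ℕ) (p : Fin n → ℝ) : ℝ :=
  max (sSup (Set.range p)) ((∑ j, p j) / m)

/-- The prediction error of the instance `(p, q)` is at most `α`, i.e.
`max (p j / q j) (q j / p j) ≤ α` for every job `j` (stated multiplicatively). -/
def PredErrLe {n : ℕ} (α : ℝ) (p q : Fin n → ℝ) : Prop :=
  ∀ j, p j ≤ α * q j ∧ q j ≤ α * p j

/-- Completion times are attained, because the amount processed is continuous in time. -/
lemma w_preCompletion {m : ℕ} (A : PreAlg m) (n : ℕ) (q p : Fin n → ℝ)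
    (hq : ∀ j, 0 < q j) (hp : ∀ j, 0 < p j) (j : Fin n) :
    A.w n q p j (preCompletion A n q p j) = p j := by
  have hcont : Continuous (A.w n q p j) := by
    have : LipschitzWith 1 (A.w n q p j) := by
      refine LipschitzWith.of_le_add fun x y => ?_
      rw [Real.dist_eq]
      rcases le_total y x with h | h
      · have := A.w_speed_le_one n q p hq hp j y x h
        linarith [le_abs_self (x - y)]
      · have := A.w_mono n q p hq hp j h
        linarith [abs_nonneg (x - y)]
    exact this.continuous
  have hcl : IsClosed {t : ℝ | A.w n q p j t = p j} := isClosed_eq hcont continuous_const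
  refine hcl.csInf_mem (A.completes n q p hq hp j) ⟨0, fun t ht => ?_⟩
  by_contra! h
  have h1 := A.w_mono n q p hq hp j h.le
  rw [A.w_zero n q p hq hp j] at h1
  have h2 : A.w n q p j t = p j := ht
  linarith [hp j]

lemma w_lt_of_lt_preCompletion {m : ℕ} (A : PreAlg m) (n : ℕ) (q p : Fin n → ℝ)
    (hq : ∀ j, 0 < q j) (hp : ∀ j, 0 < p j) (j : Fin n) (s : ℝ)
    (hs : s < preCompletion A n q p j) : A.w n q p j s < p j := by
  refine lt_of_le_of_ne (A.w_le n q p hq hp j s) fun h => ?_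
  refine (not_le.mpr hs) (csInf_le (s := {t : ℝ | A.w n q p j t = p j}) ⟨0, fun t ht => ?_⟩ h)
  by_contra! h'
  have h1 := A.w_mono n q p hq hp j h'.le
  rw [A.w_zero n q p hq hp j] at h1
  have h2 : A.w n q p j t = p j := ht
  linarith [hp j]

/-- The adversary: on `N + 1` jobs with equal predictions, enlarging the job that finishes last
among unit jobs to length `a` forces makespan at least `(N + 1)/m + a - 1`. -/
lemma exists_late_job {m : ℕ} (hm : 0 < m) (A : PreAlg m) (N : ℕ) (q : Fin (N + 1) → ℝ)
    (hq : ∀ j, 0 < q j) (a : ℝ) (ha : 1 ≤ a) :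
    ∃ j : Fin (N + 1), ((N : ℝ) + 1) / m + a - 1 ≤
      preMakespan A (N + 1) q (Function.update (fun _ => 1) j a) := by
  set p : Fin (N + 1) → ℝ := fun _ => 1 with hpdef
  have hp : ∀ j, 0 < p j := fun _ => one_pos
  obtain ⟨j, hj⟩ := Finite.exists_max (preCompletion A (N + 1) q p)
  refine ⟨j, ?_⟩
  set p' : Fin (N + 1) → ℝ := Function.update p j a with hp'def
  have hp'j : p' j = a := by simp [hp'def]
  have hp' : ∀ i, 0 < p' i := by
    intro i
    by_cases h : i = j
    · subst h; rw [hp'j]; linarith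
    · simp [hp'def, h, hpdef]
  set T := preCompletion A (N + 1) q p j with hT
  have hdone : ∀ i, A.w (N + 1) q p i T = 1 := fun i => le_antisymm
    (A.w_le _ q p hq hp i T)
    ((w_preCompletion A _ q p hq hp i).ge.trans (A.w_mono _ q p hq hp i (hj i)))
  have hT0 : 0 ≤ T := by
    by_contra! h
    have h1 := A.w_mono _ q p hq hp j h.le
    rw [A.w_zero _ q p hq hp j, hdone j] at h1
    linarith
  have hwork : (N : ℝ) + 1 ≤ m * T := by
    have h := A.w_total_speed _ q p hq hp 0 T hT0
    simpa [A.w_zero _ q p hq hp, hdone] using h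
  have hsame : ∀ t, t ≤ T → A.w (N + 1) q p j t = A.w (N + 1) q p' j t := by
    refine A.nonclairvoyant _ q p p' hq hp hp' T (fun i => ?_) j
    by_cases h : i = j
    · subst h
      right
      intro s hs
      have hlt : A.w (N + 1) q p i s < 1 := w_lt_of_lt_preCompletion A _ q p hq hp i s hs
      exact ⟨hlt, by rw [hp'j]; linarith⟩
    · left
      simp [hp'def, h]
  set c := preCompletion A (N + 1) q p' j with hc
  have hwc : A.w (N + 1) q p' j c = a := by rw [hc, w_preCompletion A _ q p' hq hp' j, hp'j]
  have hTc : T ≤ c := by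
    by_contra! h
    have h1 : A.w (N + 1) q p j c < 1 := w_lt_of_lt_preCompletion A _ q p hq hp j c h
    rw [hsame c h.le, hwc] at h1
    linarith
  have hspeed := A.w_speed_le_one _ q p' hq hp' j T c hTc
  rw [hwc, ← hsame T le_rfl, hdone j] at hspeed
  have hdiv : ((N : ℝ) + 1) / m ≤ T := by
    rw [div_le_iff₀ (by exact_mod_cast hm)]
    linarith
  have hle : c ≤ preMakespan A (N + 1) q p' :=
    le_csSup (Set.finite_range _).bddAbove ⟨j, rfl⟩
  linarith

/-- For every `m ≥ 2` and every `α ≥ 1`, every non-clairvoyant algorithm for preemptive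
scheduling with prediction on `m` identical machines has competitive ratio at least
`(⌈(m−1)α²⌉ + mα² − m + 1)/(α² + ⌈(m−1)α²⌉)`. -/
theorem pre_lower_bound_ceil (m : ℕ) (hm : 2 ≤ m) (α : ℝ) (hα : 1 ≤ α)
    (A : PreAlg m) (ε : ℝ) (hε : 0 < ε) :
    ∃ (n : ℕ) (p q : Fin n → ℝ),
      (∀ j, 0 < p j) ∧ (∀ j, 0 < q j) ∧ PredErrLe α p q ∧
      (((⌈((m : ℝ) - 1) * α ^ 2⌉ : ℝ) + (m : ℝ) * α ^ 2 - (m : ℝ) + 1)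
            / (α ^ 2 + (⌈((m : ℝ) - 1) * α ^ 2⌉ : ℝ)) - ε) * OPTpre m n p
        < preMakespan A n q p := by
  have hm' : (2 : ℝ) ≤ m := by exact_mod_cast hm
  have ha : 1 ≤ α ^ 2 := one_le_pow₀ hα
  have hceil := Int.le_ceil (((m : ℝ) - 1) * α ^ 2)
  have hx : 0 ≤ ((m : ℝ) - 1) * α ^ 2 := mul_nonneg (by linarith) (by linarith)
  obtain ⟨N, hN⟩ := Int.eq_ofNat_of_zero_le (Int.ceil_nonneg hx)
  rw [hN] at hceil ⊢
  simp only [Int.cast_natCast] at hceil ⊢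
  set a := α ^ 2 with hadef
  obtain ⟨j, hj⟩ := exists_late_job (by omega) A N (fun _ => α) (fun _ => by linarith) a ha
  set p : Fin (N + 1) → ℝ := Function.update (fun _ => 1) j a with hpdef
  have hp1 : ∀ i, 1 ≤ p i ∧ p i ≤ a := by
    intro i
    by_cases h : i = j
    · subst h; simp [hpdef, ha]
    · simp [hpdef, h, ha]
  have hsum : ∑ i, p i = N + a := by
    rw [hpdef, Finset.sum_update_of_mem (Finset.mem_univ j)]
    simp [Finset.card_sdiff, add_comm]
  refine ⟨N + 1, p, fun _ => α, fun i => by linarith [(hp1 i).1], fun _ => by linarith,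
    fun i => ⟨?_, ?_⟩, lt_of_lt_of_le ?_ hj⟩
  · have := (hp1 i).2
    rw [hadef] at this
    linarith [sq α]
  · exact le_mul_of_one_le_right (by linarith) (hp1 i).1
  have hm0 : (0 : ℝ) < m := by linarith
  have hNa : 0 < a + (N : ℝ) := by positivity
  have hOPT : OPTpre m (N + 1) p = (a + N) / m := by
    unfold OPTpre
    rw [hsum, add_comm (N : ℝ) a]
    refine max_eq_right (csSup_le (Set.range_nonempty _) ?_)
    rintro _ ⟨i, rfl⟩
    refine (hp1 i).2.trans ?_
    rw [le_div_iff₀ hm0]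
    linarith
  have hpos : 0 < (a + N) / (m : ℝ) := by positivity
  have hval : ((N : ℝ) + m * a - m + 1) / (a + N) * ((a + N) / m) = ((N : ℝ) + 1) / m + a - 1 := by
    field_simp
    ring
  rw [hOPT, sub_mul, hval]
  linarith [mul_pos hε hpos]
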